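/- Under the standing assumption, for every E ∈ ℝ the operator (E − V_1) + i·1 is invertible and the Prüfer phase at N = 1 equals the Cayley transform U_1^E = ((E − V_1) − i·1)((E − V_1) + i·1)⁻¹; moreover, for every real E > 4Λ one has ‖U_1^E − (1 − 2i/E)·1‖ ≤ 8Λ/E². -/

import Mathlib

open ContinuousLinearMap

noncomputable section

variable {H : Type*} [NormedAddCommGroup H] [InnerProductSpace ℂ H] [CompleteSpace H]

/-- The Hilbert space `K = H ⊕ H` (with the `ℓ²` product norm). -/
abbrev Kspace (H : Type*) [NormedAddCommGroup H] [InnerProductSpace ℂ H] : Type _ :=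
  WithLp 2 (H × H)

/-- The block operator `[[A,B],[C,D]]` on `K`, acting by `(x,y) ↦ (Ax + By, Cx + Dy)`. -/
def blockOp (A B C D : H →L[ℂ] H) : Kspace H →L[ℂ] Kspace H :=
  (((WithLp.prodContinuousLinearEquiv 2 ℂ H H).symm : (H × H) →L[ℂ] Kspace H)) ∘L
    (((A ∘L ContinuousLinearMap.fst ℂ H H) + (B ∘L ContinuousLinearMap.snd ℂ H H)).prod
      ((C ∘L ContinuousLinearMap.fst ℂ H H) + (D ∘L ContinuousLinearMap.snd ℂ H H))) ∘L
    (((WithLp.prodContinuousLinearEquiv 2 ℂ H H) : Kspace H →L[ℂ] H × H))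

/-- Upper-left block of an operator on `K`. -/
def blkA (M : Kspace H →L[ℂ] Kspace H) : H →L[ℂ] H :=
  ContinuousLinearMap.fst ℂ H H ∘L
    ((WithLp.prodContinuousLinearEquiv 2 ℂ H H) : Kspace H →L[ℂ] H × H) ∘L M ∘L
    ((WithLp.prodContinuousLinearEquiv 2 ℂ H H).symm : (H × H) →L[ℂ] Kspace H) ∘L
    ContinuousLinearMap.inl ℂ H H

/-- Upper-right block of an operator on `K`. -/
def blkB (M : Kspace H →L[ℂ] Kspace H) : H →L[ℂ] H :=
  ContinuousLinearMap.fst ℂ H H ∘L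
    ((WithLp.prodContinuousLinearEquiv 2 ℂ H H) : Kspace H →L[ℂ] H × H) ∘L M ∘L
    ((WithLp.prodContinuousLinearEquiv 2 ℂ H H).symm : (H × H) →L[ℂ] Kspace H) ∘L
    ContinuousLinearMap.inr ℂ H H

/-- Lower-left block of an operator on `K`. -/
def blkC (M : Kspace H →L[ℂ] Kspace H) : H →L[ℂ] H :=
  ContinuousLinearMap.snd ℂ H H ∘L
    ((WithLp.prodContinuousLinearEquiv 2 ℂ H H) : Kspace H →L[ℂ] H × H) ∘L M ∘L
    ((WithLp.prodContinuousLinearEquiv 2 ℂ H H).symm : (H × H) →L[ℂ] Kspace H) ∘L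
    ContinuousLinearMap.inl ℂ H H

/-- Lower-right block of an operator on `K`. -/
def blkD (M : Kspace H →L[ℂ] Kspace H) : H →L[ℂ] H :=
  ContinuousLinearMap.snd ℂ H H ∘L
    ((WithLp.prodContinuousLinearEquiv 2 ℂ H H) : Kspace H →L[ℂ] H × H) ∘L M ∘L
    ((WithLp.prodContinuousLinearEquiv 2 ℂ H H).symm : (H × H) →L[ℂ] Kspace H) ∘L
    ContinuousLinearMap.inr ℂ H H

/-- The Cayley transform `C = (1/√2)[[1, -i],[1, i]]`. -/
def Cayley (H : Type*) [NormedAddCommGroup H] [InnerProductSpace ℂ H] [CompleteSpace H] :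
    Kspace H →L[ℂ] Kspace H :=
  blockOp (((Real.sqrt 2 : ℂ)⁻¹) • 1) ((-((Real.sqrt 2 : ℂ)⁻¹ * Complex.I)) • 1)
    (((Real.sqrt 2 : ℂ)⁻¹) • 1) ((((Real.sqrt 2 : ℂ)⁻¹ * Complex.I)) • 1)

/-- The transfer operator `M^E = [[(E − V)T⁻¹, −T*],[T⁻¹, 0]]`, where the inverse `T⁻¹`
is given as the operator `Tinv`. -/
def transferOp (E : ℝ) (V T Tinv : H →L[ℂ] H) : Kspace H →L[ℂ] Kspace H :=
  blockOp ((((E : ℂ) • (1 : H →L[ℂ] H)) - V) ∘L Tinv) (-(adjoint T)) Tinv 0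

/-- The product of transfer operators `M_N^E ⋯ M_1^E` (empty product for `N = 0`). -/
def transferProd (V T Tinv : ℕ → H →L[ℂ] H) (E : ℝ) : ℕ → (Kspace H →L[ℂ] Kspace H)
  | 0 => 1
  | n + 1 => transferOp E (V (n + 1)) (T (n + 1)) (Tinv (n + 1)) ∘L transferProd V T Tinv E n

/-- `a_N^E`: the upper-left block of `M_N^E ⋯ M_1^E`, so that
`(a_N^E x, b_N^E x) = M_N^E ⋯ M_1^E (x, 0)`. -/
def pruferA (V T Tinv : ℕ → H →L[ℂ] H) (N : ℕ) (E : ℝ) : H →L[ℂ] H :=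
  blkA (transferProd V T Tinv E N)

/-- `b_N^E`: the lower-left block of `M_N^E ⋯ M_1^E`. -/
def pruferB (V T Tinv : ℕ → H →L[ℂ] H) (N : ℕ) (E : ℝ) : H →L[ℂ] H :=
  blkC (transferProd V T Tinv E N)

/-- The Prüfer phase `U_N^E = (a_N^E − i b_N^E)(a_N^E + i b_N^E)⁻¹`. -/
def pruferU (V T Tinv : ℕ → H →L[ℂ] H) (N : ℕ) (E : ℝ) : H →L[ℂ] H :=
  (pruferA V T Tinv N E - Complex.I • pruferB V T Tinv N E) *
    Ring.inverse (pruferA V T Tinv N E + Complex.I • pruferB V T Tinv N E)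

/-!
The first transfer operator has first block column `((E − V₁)T₁⁻¹, T₁⁻¹)`, and the common factor
`T₁⁻¹` cancels in the Prüfer phase, leaving the Cayley transform of `E − V₁`. Since
`(x − i)(x + i)⁻¹ = 1 − 2i(x + i)⁻¹`, the asymptotics in `E` are those of the resolvent of
`W = V₁ − i` at `E`, and `(E − W)⁻¹ − E⁻¹ = E⁻¹(E − W)⁻¹W` is of order `‖W‖/E²`.
-/

section Resolvent

variable {𝕜 A : Type*} [NormedField 𝕜]

theorem smul_resolvent [Ring A] [Algebra 𝕜 A] {w : A} {z : 𝕜} (hz : z ∈ resolventSet 𝕜 w) :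
    z • resolvent w z = 1 + resolvent w z * w := by
  have hmul : resolvent w z * (z • (1 : A) - w) = 1 := by
    rw [← Algebra.algebraMap_eq_smul_one]
    exact Ring.inverse_mul_cancel _ hz
  rw [← hmul, mul_sub, mul_smul_comm, mul_one, sub_add_cancel]

theorem resolvent_sub_inv_smul_one [Ring A] [Algebra 𝕜 A] {w : A} {z : 𝕜}
    (hz : z ∈ resolventSet 𝕜 w) (hz₀ : z ≠ 0) :
    resolvent w z - z⁻¹ • (1 : A) = z⁻¹ • (resolvent w z * w) := by
  rw [sub_eq_iff_eq_add', ← smul_add, ← smul_resolvent hz, inv_smul_smul₀ hz₀]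

variable [SeminormedRing A] [NormedAlgebra 𝕜 A]

theorem norm_resolvent_le {w : A} {z : 𝕜} (hz : z ∈ resolventSet 𝕜 w) (hwz : ‖w‖ < ‖z‖) :
    ‖resolvent w z‖ ≤ ‖(1 : A)‖ / (‖z‖ - ‖w‖) := by
  have hnorm : ‖z‖ * ‖resolvent w z‖ ≤ ‖(1 : A)‖ + ‖resolvent w z‖ * ‖w‖ :=
    calc ‖z‖ * ‖resolvent w z‖ = ‖1 + resolvent w z * w‖ := by rw [← norm_smul, smul_resolvent hz]
      _ ≤ ‖(1 : A)‖ + ‖resolvent w z‖ * ‖w‖ := norm_add_le_of_le le_rfl (norm_mul_le _ _)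
  rw [le_div_iff₀ (sub_pos.mpr hwz)]
  linarith

theorem norm_resolvent_sub_inv_smul_one_le {w : A} {z : 𝕜} (hz : z ∈ resolventSet 𝕜 w)
    (hwz : ‖w‖ < ‖z‖) :
    ‖resolvent w z - z⁻¹ • (1 : A)‖ ≤ ‖(1 : A)‖ * ‖w‖ / (‖z‖ * (‖z‖ - ‖w‖)) := by
  have hz₀ : z ≠ 0 := norm_pos_iff.mp ((norm_nonneg w).trans_lt hwz)
  calc ‖resolvent w z - z⁻¹ • (1 : A)‖ = ‖z‖⁻¹ * ‖resolvent w z * w‖ := by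
        rw [resolvent_sub_inv_smul_one hz hz₀, norm_smul, norm_inv]
    _ ≤ ‖z‖⁻¹ * (‖(1 : A)‖ / (‖z‖ - ‖w‖) * ‖w‖) := by
        gcongr
        exact norm_mul_le_of_le (norm_resolvent_le hz hwz) le_rfl
    _ = ‖(1 : A)‖ * ‖w‖ / (‖z‖ * (‖z‖ - ‖w‖)) := by
        rw [div_mul_eq_mul_div, inv_mul_eq_div, div_div, mul_comm ‖z‖]

end Resolvent

section CayleyTransform

open Complex

variable {A : Type*}

/-- The Cayley transform `(a − i)(a + i)⁻¹` of an element of a complex algebra, not to be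
confused with the block operator `Cayley`. It is `0` when `a + i` is not invertible. -/
def cayleyTransform [Ring A] [Algebra ℂ A] (a : A) : A :=
  (a - I • (1 : A)) * Ring.inverse (a + I • (1 : A))

theorem isUnit_add_I_smul_one_of_isSelfAdjoint [CStarAlgebra A] {a : A} (ha : IsSelfAdjoint a) :
    IsUnit (a + I • (1 : A)) := by
  have hI : -I ∉ spectrum ℂ a := fun h ↦ by simpa using ha.im_eq_zero_of_mem_spectrum h
  simpa [Algebra.algebraMap_eq_smul_one, add_comm] using (spectrum.notMem_iff.mp hI).neg

theorem cayleyTransform_eq_one_sub [Ring A] [Algebra ℂ A] {a : A}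
    (ha : IsUnit (a + I • (1 : A))) :
    cayleyTransform a = 1 - (2 * I) • Ring.inverse (a + I • (1 : A)) := by
  have hsplit : a - I • (1 : A) = (a + I • (1 : A)) - (2 * I) • (1 : A) := by module
  rw [cayleyTransform, hsplit, sub_mul, Ring.mul_inverse_cancel _ ha, smul_one_mul]

theorem norm_cayleyTransform_sub_le [SeminormedRing A] [NormedAlgebra ℂ A] {v : A} {z : ℂ}
    (hu : IsUnit (z • (1 : A) - v + I • (1 : A))) (hz : ‖v - I • (1 : A)‖ < ‖z‖) :
    ‖cayleyTransform (z • (1 : A) - v) - (1 - 2 * I / z) • (1 : A)‖ ≤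
      2 * (‖(1 : A)‖ * ‖v - I • (1 : A)‖ / (‖z‖ * (‖z‖ - ‖v - I • (1 : A)‖))) := by
  have hshift : z • (1 : A) - v + I • (1 : A) = algebraMap ℂ A z - (v - I • (1 : A)) := by
    rw [Algebra.algebraMap_eq_smul_one, sub_sub_eq_add_sub, sub_add_eq_add_sub]
  have hres : z ∈ resolventSet ℂ (v - I • (1 : A)) := by
    rwa [spectrum.mem_resolventSet_iff, ← hshift]
  have hdiff : cayleyTransform (z • (1 : A) - v) - (1 - 2 * I / z) • (1 : A) =
      -(2 * I) • (resolvent (v - I • (1 : A)) z - z⁻¹ • (1 : A)) := by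
    rw [cayleyTransform_eq_one_sub hu, hshift, resolvent, div_eq_mul_inv]
    module
  calc _ = 2 * ‖resolvent (v - I • (1 : A)) z - z⁻¹ • (1 : A)‖ := by
        rw [hdiff, norm_smul, norm_neg, norm_mul, norm_I, Complex.norm_ofNat, mul_one]
    _ ≤ _ := by
        gcongr
        exact norm_resolvent_sub_inv_smul_one_le hres hz

theorem norm_cayleyTransform_sub_le_div_sq [SeminormedRing A] [NormedAlgebra ℂ A] {v : A} {z : ℂ}
    {c : ℝ} (hu : IsUnit (z • (1 : A) - v + I • (1 : A))) (hone : ‖(1 : A)‖ ≤ 1)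
    (hc : ‖(1 : A)‖ ≤ c) (hv : ‖v‖ ≤ c) (hz : 4 * c < ‖z‖) :
    ‖cayleyTransform (z • (1 : A) - v) - (1 - 2 * I / z) • (1 : A)‖ ≤ 8 * c / ‖z‖ ^ 2 := by
  have hc₀ : 0 ≤ c := (norm_nonneg v).trans hv
  have hz₀ : 0 < ‖z‖ := by linarith
  have hw : ‖v - I • (1 : A)‖ ≤ 2 * c := by
    have := norm_sub_le_of_le hv (norm_smul_le I (1 : A))
    rw [norm_I, one_mul] at this
    linarith
  calc _ ≤ 2 * (‖(1 : A)‖ * ‖v - I • (1 : A)‖ / (‖z‖ * (‖z‖ - ‖v - I • (1 : A)‖))) :=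
        norm_cayleyTransform_sub_le hu (by linarith)
    _ ≤ 2 * (1 * (2 * c) / (‖z‖ * (‖z‖ / 2))) := by
        gcongr
        linarith
    _ = 8 * c / ‖z‖ ^ 2 := by
        field_simp
        ring

end CayleyTransform

theorem norm_one_le_of_mul_eq_one {A : Type*} [SeminormedRing A] {x y : A} {c : ℝ}
    (hone : ‖(1 : A)‖ ≤ 1) (hxy : x * y = 1) (hx : ‖x‖ ≤ c) (hy : ‖y‖ ≤ c) : ‖(1 : A)‖ ≤ c := by
  rcases le_total 1 c with hc | hc
  · exact hone.trans hc
  · have hc₀ : 0 ≤ c := (norm_nonneg x).trans hx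
    calc ‖(1 : A)‖ = ‖x * y‖ := by rw [hxy]
      _ ≤ c * c := norm_mul_le_of_le hx hy
      _ ≤ c := mul_le_of_le_one_left hc₀ hc

section BlockOp

variable {G : Type*} [NormedAddCommGroup G] [InnerProductSpace ℂ G]

theorem blkA_blockOp (A B C D : G →L[ℂ] G) : blkA (blockOp A B C D) = A := by
  ext x
  simp [blkA, blockOp]

theorem blkC_blockOp (A B C D : G →L[ℂ] G) : blkC (blockOp A B C D) = C := by
  ext x
  simp [blkC, blockOp]

end BlockOp

section FirstPruferPhase

variable (V T Tinv : ℕ → H →L[ℂ] H)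

theorem transferProd_one (E : ℝ) :
    transferProd V T Tinv E 1 = transferOp E (V 1) (T 1) (Tinv 1) :=
  comp_id _

theorem pruferA_one (E : ℝ) :
    pruferA V T Tinv 1 E = ((E : ℂ) • (1 : H →L[ℂ] H) - V 1) * Tinv 1 := by
  rw [pruferA, transferProd_one, transferOp, blkA_blockOp, mul_def]

theorem pruferB_one (E : ℝ) : pruferB V T Tinv 1 E = Tinv 1 := by
  rw [pruferB, transferProd_one, transferOp, blkC_blockOp]

theorem pruferU_one_eq_cayleyTransform (hTinv : IsUnit (Tinv 1)) (E : ℝ) :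
    pruferU V T Tinv 1 E = cayleyTransform ((E : ℂ) • (1 : H →L[ℂ] H) - V 1) := by
  have hcancel (x y : H →L[ℂ] H) :
      (x * Tinv 1) * Ring.inverse (y * Tinv 1) = x * Ring.inverse y := by
    rw [Ring.inverse_mul (.inr hTinv), ← mul_assoc, Ring.mul_inverse_cancel_right _ _ hTinv]
  rw [pruferU, pruferA_one, pruferB_one, ← smul_one_mul Complex.I (Tinv 1), ← sub_mul, ← add_mul,
    hcancel, cayleyTransform]

end FirstPruferPhase

theorem pruferU_one_general (V T Tinv : ℕ → H →L[ℂ] H) (Λ : ℝ)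
    (hV : IsSelfAdjoint (V 1)) (hT : T 1 ∘L Tinv 1 = 1 ∧ Tinv 1 ∘L T 1 = 1)
    (hΛ : ‖T 1‖ ≤ Λ ∧ ‖Tinv 1‖ ≤ Λ ∧ ‖V 1‖ ≤ Λ) :
    (∀ E : ℝ,
      IsUnit (((E : ℂ) • (1 : H →L[ℂ] H) - V 1) + Complex.I • (1 : H →L[ℂ] H)) ∧
      pruferU V T Tinv 1 E = cayleyTransform ((E : ℂ) • (1 : H →L[ℂ] H) - V 1)) ∧
    ∀ E : ℝ, 4 * Λ < |E| →
      ‖pruferU V T Tinv 1 E -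
        ((1 : ℂ) - 2 * Complex.I / (E : ℂ)) • (1 : H →L[ℂ] H)‖ ≤ 8 * Λ / E ^ 2 := by
  have hunit (E : ℝ) : IsUnit ((E : ℂ) • (1 : H →L[ℂ] H) - V 1 + Complex.I • 1) :=
    isUnit_add_I_smul_one_of_isSelfAdjoint <|
      (IsSelfAdjoint.smul (Complex.conj_ofReal E) (.one _)).sub hV
  have hU := pruferU_one_eq_cayleyTransform V T Tinv (isUnit_iff_exists.mpr ⟨T 1, hT.2, hT.1⟩)
  have hone : ‖(1 : H →L[ℂ] H)‖ ≤ 1 := norm_id_le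
  have honeΛ : ‖(1 : H →L[ℂ] H)‖ ≤ Λ := norm_one_le_of_mul_eq_one hone hT.1 hΛ.1 hΛ.2.1
  refine ⟨fun E ↦ ⟨hunit E, hU E⟩, fun E hE ↦ ?_⟩
  rw [← Real.norm_eq_abs, ← Complex.norm_real] at hE
  rw [hU, ← sq_abs, ← Real.norm_eq_abs, ← Complex.norm_real]
  exact norm_cayleyTransform_sub_le_div_sq (hunit E) hone honeΛ hΛ.2.2 hE

/-- Under the standing assumption, for every `E` the operator `(E − V₁) + i` is invertible
and the `N = 1` Prüfer phase is the Cayley transform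
`U_1^E = ((E − V₁) − i)((E − V₁) + i)⁻¹`; moreover for every real `E > 4Λ` one has
`‖U_1^E − (1 − 2i/E)·1‖ ≤ 8Λ/E²`. -/
theorem pruferU_one (V T Tinv : ℕ → H →L[ℂ] H) (Λ : ℝ)
    (hV : ∀ n, 1 ≤ n → IsSelfAdjoint (V n))
    (hT : ∀ n, 1 ≤ n → T n ∘L Tinv n = 1 ∧ Tinv n ∘L T n = 1)
    (hT1 : T 1 = 1) (hTinv1 : Tinv 1 = 1)
    (hΛ : ∀ n, 1 ≤ n → ‖T n‖ ≤ Λ ∧ ‖Tinv n‖ ≤ Λ ∧ ‖V n‖ ≤ Λ) :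
    (∀ E : ℝ,
      IsUnit (((E : ℂ) • (1 : H →L[ℂ] H) - V 1) + Complex.I • (1 : H →L[ℂ] H)) ∧
      pruferU V T Tinv 1 E =
        (((E : ℂ) • (1 : H →L[ℂ] H) - V 1) - Complex.I • (1 : H →L[ℂ] H)) *
          Ring.inverse (((E : ℂ) • (1 : H →L[ℂ] H) - V 1) +
            Complex.I • (1 : H →L[ℂ] H))) ∧
    ∀ E : ℝ, 4 * Λ < E →
      ‖pruferU V T Tinv 1 E -
        ((1 : ℂ) - 2 * Complex.I / (E : ℂ)) • (1 : H →L[ℂ] H)‖ ≤ 8 * Λ / E ^ 2 := by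
  have h := pruferU_one_general V T Tinv Λ (hV 1 le_rfl) (hT 1 le_rfl) (hΛ 1 le_rfl)
  exact ⟨h.1, fun E hE ↦ h.2 E (hE.trans_le (le_abs_self E))⟩
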